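/- arXiv:2412.12787 — 2 statements merged into one kernel-verified Lean document; each statement's English description precedes it below -/
import Mathlib

section
/- Let D = 2r+1 ≥ 5 be an odd integer, and let b ≥ 2, 1 ≤ c ≤ r, and n be integers with 2r+2 ≤ n ≤ 2r + (b−2)c + 2. Then σ̃_{2,max}(D,n) ≥ C⁻(r,b,c). -/
open scoped BigOperators
open Classical

/-- The Dirichlet energy of a function on a finite graph: `∑_{edges xy} (f x - f y)^2`. -/
noncomputable def dirichletEnergy {V : Type*} [Fintype V] (G : SimpleGraph V) (f : V → ℝ) : ℝ :=
  (∑ x : V, ∑ y : V, if G.Adj x y then (f x - f y) ^ 2 else 0) / 2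

/-- The `k`-th Steklov (Dirichlet-to-Neumann) eigenvalue (1-indexed, in increasing order
with multiplicity) of a finite graph `G` with boundary `B`, via the variational
(Courant–Fischer) characterization. -/
noncomputable def steklovEig {V : Type*} [Fintype V] (G : SimpleGraph V) (B : Finset V)
    (k : ℕ) : ℝ :=
  sInf { t : ℝ | ∃ F : Submodule ℝ (V → ℝ),
    Module.finrank ℝ (F.map (LinearMap.funLeft ℝ ℝ (fun x : {v // v ∈ B} => (x : V)))) = k ∧
    ∀ f ∈ F, dirichletEnergy G f ≤ t * ∑ x ∈ B, (f x) ^ 2 }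

/-- The set of leaves (vertices of degree 1) of a finite graph, as a `Finset`. -/
noncomputable def leavesFinset {V : Type*} [Fintype V] (G : SimpleGraph V) : Finset V :=
  Finset.univ.filter fun v => G.degree v = 1

/-- `σ_{k,max}(b,n)`: the maximum of the `k`-th Steklov eigenvalue over all trees with
`b` leaves (as boundary) and `n` vertices. -/
noncomputable def sigmaMax (k b n : ℕ) : ℝ :=
  sSup { s : ℝ | ∃ G : SimpleGraph (Fin n), G.IsTree ∧ (leavesFinset G).card = b ∧
    s = steklovEig G (leavesFinset G) k }

/-- `σ̃_{2,max}(D,n)`: the maximum of the first nontrivial Steklov eigenvalue over all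
trees with diameter `D` and `n` vertices. -/
noncomputable def sigmaTildeMax (D n : ℕ) : ℝ :=
  sSup { s : ℝ | ∃ G : SimpleGraph (Fin n), G.IsTree ∧ G.diam = D ∧
    s = steklovEig G (leavesFinset G) 2 }

/-- The quantity `C⁻(r,b,c)` from the paper:
`(2br + b + 2c - 2r - 1 - √(b² - 2b + 4c² - 8cr - 4c + 4r² + 4r + 1)) /
  (2(br² + br + 2cr + c - 2r² - 2r))`. -/
noncomputable def Cminus (r b c : ℕ) : ℝ :=
  (2 * b * r + b + 2 * c - 2 * r - 1 -
      Real.sqrt ((b : ℝ) ^ 2 - 2 * b + 4 * (c : ℝ) ^ 2 - 8 * c * r - 4 * c +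
        4 * (r : ℝ) ^ 2 + 4 * r + 1)) /
    (2 * ((b : ℝ) * r ^ 2 + b * r + 2 * c * r + c - 2 * (r : ℝ) ^ 2 - 2 * r))


lemma cminus_facts (r b c : ℕ) (hr : 2 ≤ r) (hb : 2 ≤ b) (hc1 : 1 ≤ c) (hc2 : c ≤ r) :
    ∃ s : ℝ, s = Cminus r b c ∧ 0 < s ∧ 0 < 1 - s * r ∧ 0 < 1 - s * c ∧ 0 < s * (r + 1) - 1 ∧
      1 / (s * (r + 1) - 1) = 1 / (1 - s * r) + (b - 2) * (1 / (1 - s * c)) := by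
  have hr' : (2:ℝ) ≤ r := by exact_mod_cast hr
  have hb' : (2:ℝ) ≤ b := by exact_mod_cast hb
  have hc1' : (1:ℝ) ≤ c := by exact_mod_cast hc1
  have hc2' : (c:ℝ) ≤ r := by exact_mod_cast hc2
  set R : ℝ := (r : ℝ) with hR
  set β : ℝ := (b : ℝ) with hβ
  set C : ℝ := (c : ℝ) with hC
  obtain ⟨A, hA⟩ : ∃ A : ℝ, A = (2 * R + 1) * C + (β - 2) * (R ^ 2 + R) := ⟨_, rfl⟩
  obtain ⟨Q, hQ⟩ : ∃ Q : ℝ, Q = (2 * R + 1) * (β - 1) + 2 * C := ⟨_, rfl⟩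
  have hApos : 0 < A := by
    rw [hA]
    have : 0 ≤ (β - 2) * (R ^ 2 + R) := mul_nonneg (by linarith) (by positivity)
    have : 0 < (2 * R + 1) * C := by positivity
    linarith
  obtain ⟨d, hd⟩ : ∃ d : ℝ, d = Q ^ 2 - 4 * A * β := ⟨_, rfl⟩
  obtain ⟨s, hs⟩ : ∃ s : ℝ, s = (Q - √d) / (2 * A) := ⟨_, rfl⟩
  have hsC : s = Cminus r b c := by
    rw [hs, Cminus]
    congr 1
    · congr 1
      · rw [hQ]; ring
      · congr 1
        rw [hd, hQ, hA]; ring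
    · rw [hA]; ring
  obtain ⟨x, hx⟩ : ∃ x : ℝ, x = 2 / (2 * R + 1) := ⟨_, rfl⟩
  obtain ⟨y, hy⟩ : ∃ y : ℝ, y = 1 / (R + 1) := ⟨_, rfl⟩
  have hx1 : x * (2 * R + 1) = 2 := by rw [hx]; field_simp
  have hy1 : y * (R + 1) = 1 := by rw [hy]; field_simp
  have hx0 : 0 < x := by rw [hx]; positivity
  have hy0 : 0 < y := by rw [hy]; positivity
  have hyx : y < x := by
    rw [hx, hy, div_lt_div_iff₀ (by positivity) (by positivity)]; linarith
  have hP : ∀ t : ℝ, A * t ^ 2 - Q * t + β = (1 - t * (R + 1)) * (1 - t * C)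
      + (1 - t * R) * (1 - t * C) + (β - 2) * (1 - t * R) * (1 - t * (R + 1)) := by
    intro t; rw [hA, hQ]; ring
  have hPx : A * x ^ 2 - Q * x + β ≤ 0 := by
    rw [hP]
    have e1 : 1 - x * (R + 1) = - (x / 2) := by linarith
    have e2 : 1 - x * R = x / 2 := by linarith
    rw [e1, e2]
    nlinarith [mul_nonneg (sub_nonneg.2 hb') (sq_nonneg x)]
  have hPy : 0 < A * y ^ 2 - Q * y + β := by
    rw [hP]
    have e1 : 1 - y * (R + 1) = 0 := by linarith
    have e2 : 1 - y * R = y := by linarith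
    rw [e1, e2]
    have : 0 < 1 - y * C := by nlinarith
    have := mul_pos hy0 this
    linarith
  have hdx : (2 * A * x - Q) ^ 2 ≤ d := by rw [hd]; nlinarith
  have hdy : d < (2 * A * y - Q) ^ 2 := by rw [hd]; nlinarith
  have hd0 : 0 ≤ d := le_trans (sq_nonneg _) hdx
  have hsd : √d ^ 2 = d := Real.sq_sqrt hd0
  have h2s : 2 * A * s = Q - √d := by rw [hs]; field_simp
  have hab := abs_le_of_sq_le_sq' (le_of_le_of_eq hdx hsd.symm) (Real.sqrt_nonneg d)
  have hsx : s ≤ x := by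
    have : 2 * A * s ≤ 2 * A * x := by linarith [hab.1]
    exact le_of_mul_le_mul_left this (by positivity)
  have hys : y < s := by
    by_contra hcon
    push Not at hcon
    have h1 : 2 * A * s ≤ 2 * A * y := mul_le_mul_of_nonneg_left hcon (by positivity)
    have h2 : 2 * A * y ≤ 2 * A * x := mul_le_mul_of_nonneg_left hyx.le (by positivity)
    have : (2 * A * y - Q) ^ 2 ≤ √d ^ 2 := sq_le_sq' (by linarith) (by linarith [hab.2])
    linarith
  have hPs : A * s ^ 2 - Q * s + β = 0 := by
    have : 4 * A * (A * s ^ 2 - Q * s + β) = 0 := by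
      have : 4 * A * (A * s ^ 2 - Q * s + β) = (2 * A * s - Q) ^ 2 - d := by rw [hd]; ring
      rw [this, h2s]; linear_combination hsd
    rcases mul_eq_zero.1 this with h | h
    · linarith
    · exact h
  have h0 : 0 < s := by linarith
  have hsR : s * (2 * R + 1) ≤ 2 := 
    (mul_le_mul_of_nonneg_right hsx (by positivity)).trans_eq hx1
  have h1 : 0 < 1 - s * R := by linarith
  have hsCR : s * C ≤ s * R := mul_le_mul_of_nonneg_left hc2' h0.le
  have h2 : 0 < 1 - s * C := by linarith
  have hyR : y * (R + 1) < s * (R + 1) := mul_lt_mul_of_pos_right hys (by positivity)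
  have h3 : 0 < s * (R + 1) - 1 := by linarith
  refine ⟨s, hsC, h0, h1, h2, h3, ?_⟩
  rw [hP] at hPs
  field_simp
  linarith

lemma chain_bound (s c : ℝ) (hs : 0 < s) (y : ℕ → ℝ) (l : ℕ) (hl : 1 ≤ l) (hlc : (l:ℝ) ≤ c)
    (hc : 0 < 1 - s * c) :
    s * y l ^ 2 - s * y 0 ^ 2 * (1 / (1 - s * c)) ≤
      ∑ j ∈ Finset.range l, (y (j + 1) - y j) ^ 2 := by
  have hl' : (1:ℝ) ≤ l := by exact_mod_cast hl
  have h := sq_sum_le_card_mul_sum_sq (s := Finset.range l) (f := fun j => y (j + 1) - y j)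
  rw [Finset.sum_range_sub, Finset.card_range] at h
  set S := ∑ j ∈ Finset.range l, (y (j + 1) - y j) ^ 2
  have hS : 0 ≤ S := Finset.sum_nonneg fun _ _ => sq_nonneg _
  have h' : (y l - y 0) ^ 2 ≤ c * S := h.trans (mul_le_mul_of_nonneg_right hlc hS)
  have hc0 : 0 < c := by linarith
  set w := 1 - s * c with hw
  suffices s * y l ^ 2 * w - s * y 0 ^ 2 ≤ S * w by
    have e : s * y l ^ 2 - s * y 0 ^ 2 * (1 / w) = (s * y l ^ 2 * w - s * y 0 ^ 2) / w := by
      field_simp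
    rw [e, div_le_iff₀ hc]; exact this
  suffices c * (s * y l ^ 2 * w - s * y 0 ^ 2) ≤ c * (S * w) from le_of_mul_le_mul_left this hc0
  have h2 : (y l - y 0) ^ 2 * w ≤ c * S * w := mul_le_mul_of_nonneg_right h' hc.le
  have hsc : s * c = 1 - w := by linarith
  have e : c * (s * y l ^ 2 * w - s * y 0 ^ 2) = (1 - w) * (y l ^ 2 * w - y 0 ^ 2) := by
    rw [← hsc]; ring
  rw [e]
  nlinarith [sq_nonneg (y l * w - y 0)]

lemma long_bound (s c : ℝ) (hs : 0 < s) (y : ℕ → ℝ) (l : ℕ) (hl : 1 ≤ l) (hlc : (l:ℝ) = c)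
    (hc : 0 < s * c - 1) (hy : (s * c - 1) * y l + y 0 = 0) :
    s * y l ^ 2 + s * y 0 ^ 2 * (1 / (s * c - 1)) ≤
      ∑ j ∈ Finset.range l, (y (j + 1) - y j) ^ 2 := by
  have hl' : (1:ℝ) ≤ l := by exact_mod_cast hl
  have h := sq_sum_le_card_mul_sum_sq (s := Finset.range l) (f := fun j => y (j + 1) - y j)
  rw [Finset.sum_range_sub, Finset.card_range, hlc] at h
  set S := ∑ j ∈ Finset.range l, (y (j + 1) - y j) ^ 2
  have hc0 : 0 < c := by linarith
  set w := s * c - 1 with hw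
  have e0 : y 0 = - (w * y l) := by linarith
  rw [e0] at h ⊢
  suffices c * (s * y l ^ 2 + s * (- (w * y l)) ^ 2 * (1 / w)) ≤ c * S from
    le_of_mul_le_mul_left this hc0
  refine le_trans (le_of_eq ?_) h
  have hsc : c * s = 1 + w := by linarith
  have : c * (s * y l ^ 2 + s * (- (w * y l)) ^ 2 * (1 / w)) = (c * s) * (y l ^ 2 + w * y l ^ 2) := by
    field_simp
  rw [this, hsc]; ring

/-- Start vertices of the arms. -/
def St (r c i : ℕ) : Prop :=
  i = 1 ∨ i = r + 2 ∨ (2 * r + 2 ≤ i ∧ c ∣ (i - (2 * r + 2)))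

/-- Parent map. -/
noncomputable def par (r c i : ℕ) : ℕ := if St r c i then 0 else i - 1

lemma par_lt (r c i : ℕ) (hi : i ≠ 0) : par r c i < i := by
  unfold par; split_ifs <;> omega

lemma par_of_st {r c i : ℕ} (h : St r c i) : par r c i = 0 := by simp [par, h]

lemma par_of_not {r c i : ℕ} (h : ¬ St r c i) : par r c i = i - 1 := by simp [par, h]

lemma par_eq {r c i v : ℕ} (h : par r c i = v) (hv : v ≠ 0) : i = v + 1 ∧ ¬ St r c i := by
  unfold par at h
  split_ifs at h with h1
  · omega
  · exact ⟨by omega, h1⟩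

/-- The star-like tree. -/
noncomputable def starTree (r c n : ℕ) : SimpleGraph (Fin n) where
  Adj x y := ((x : ℕ) ≠ 0 ∧ par r c x = y) ∨ ((y : ℕ) ≠ 0 ∧ par r c y = x)
  symm := ⟨fun _ _ h => h.symm⟩
  loopless := ⟨fun x h => by
    rcases h with h | h
    · have := par_lt r c x h.1; omega
    · have := par_lt r c x h.1; omega⟩

lemma starTree_adj {r c n : ℕ} (x y : Fin n) : (starTree r c n).Adj x y ↔
    ((x : ℕ) ≠ 0 ∧ par r c x = y) ∨ ((y : ℕ) ≠ 0 ∧ par r c y = x) := Iff.rfl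

/-- parent as an element of `Fin n`. -/
noncomputable def parF (r c : ℕ) {n : ℕ} (x : Fin n) : Fin n :=
  ⟨par r c x, lt_of_le_of_lt (by
    by_cases h : (x : ℕ) = 0
    · rw [par]; split_ifs <;> omega
    · exact (par_lt r c x h).le) x.2⟩

lemma adj_parF {r c n : ℕ} (x : Fin n) (hx : (x : ℕ) ≠ 0) :
    (starTree r c n).Adj x (parF r c x) := Or.inl ⟨hx, rfl⟩

lemma starTree_connected (r c n : ℕ) (hn : 0 < n) : (starTree r c n).Connected := by
  have key : ∀ k : ℕ, ∀ h : k < n, (starTree r c n).Reachable ⟨k, h⟩ ⟨0, hn⟩ := by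
    intro k
    induction k using Nat.strong_induction_on with
    | _ k ih =>
      intro h
      by_cases hk : k = 0
      · subst hk; exact SimpleGraph.Reachable.refl _
      · exact (adj_parF (r := r) (c := c) (⟨k, h⟩ : Fin n) hk).reachable.trans
          (ih (par r c k) (par_lt r c k hk) _)
  have : Nonempty (Fin n) := ⟨⟨0, hn⟩⟩
  exact ⟨fun x y => (key x x.2).trans (key y y.2).symm⟩

lemma starTree_isTree (r c n : ℕ) (hn : 0 < n) : (starTree r c n).IsTree := by
  rw [SimpleGraph.isTree_iff_connected_and_card]
  have hconn := starTree_connected r c n hn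
  refine ⟨hconn, le_antisymm ?_ hconn.card_vert_le_card_edgeSet_add_one⟩
  have h1 : Nat.card (starTree r c n).edgeSet ≤
      (((Finset.univ : Finset (Fin n)).erase ⟨0, hn⟩).image
        (fun x => s(x, parF r c x))).card := by
    rw [← Set.ncard_coe_finset, ← Nat.card_coe_set_eq]
    apply Nat.card_mono (Set.toFinite _)
    intro e
    induction e using Sym2.ind with
    | _ x y =>
      intro h
      rw [SimpleGraph.mem_edgeSet, starTree_adj] at h
      simp only [Finset.coe_image, Set.mem_image, Finset.mem_coe, Finset.mem_erase,
        Finset.mem_univ, and_true]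
      rcases h with h | h
      · refine ⟨x, fun e => h.1 (by rw [e]), ?_⟩
        have : parF r c x = y := Fin.ext h.2
        rw [this]
      · refine ⟨y, fun e => h.1 (by rw [e]), ?_⟩
        have : parF r c y = x := Fin.ext h.2
        rw [this]; exact Sym2.eq_swap
  have h2 := Finset.card_image_le (s := (Finset.univ : Finset (Fin n)).erase ⟨0, hn⟩)
    (f := fun x => s(x, parF r c x))
  rw [Finset.card_erase_of_mem (Finset.mem_univ _), Finset.card_univ, Fintype.card_fin] at h2
  rw [Nat.card_eq_fintype_card (α := Fin n), Fintype.card_fin]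
  omega

/-- depth -/
def dep (r c v : ℕ) : ℕ :=
  if v ≤ r + 1 then v else if v ≤ 2 * r + 1 then v - (r + 1) else (v - (2 * r + 2)) % c + 1

lemma dep_par (r c v : ℕ) (hr : 2 ≤ r) (hv : v ≠ 0) :
    dep r c v = dep r c (par r c v) + 1 := by
  by_cases h : St r c v
  · rw [par_of_st h]
    have h0 : dep r c 0 = 0 := by simp [dep]
    rw [h0]
    rcases h with h | h | h
    · subst h; simp [dep]
    · subst h; unfold dep; split_ifs <;> omega
    · unfold dep
      rw [if_neg (by omega), if_neg (by omega), Nat.mod_eq_zero_of_dvd h.2]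
  · rw [par_of_not h]
    unfold St at h
    push Not at h
    unfold dep
    by_cases h1 : v ≤ r + 1
    · rw [if_pos h1, if_pos (by omega)]; omega
    · by_cases h2 : v ≤ 2 * r + 1
      · rw [if_neg h1, if_pos h2, if_neg (by omega), if_pos (by omega)]; omega
      · have h3 := h.2.2 (by omega)
        by_cases h4 : v = 2 * r + 2
        · exfalso; apply h3; simp [h4]
        · rw [if_neg h1, if_neg h2, if_neg (by omega), if_neg (by omega)]
          obtain ⟨j, rfl⟩ : ∃ j, v = 2 * r + 2 + (j + 1) := ⟨v - (2 * r + 3), by omega⟩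
          have e1 : 2 * r + 2 + (j + 1) - (2 * r + 2) = j + 1 := by omega
          have e2 : 2 * r + 2 + (j + 1) - 1 - (2 * r + 2) = j := by omega
          rw [e1] at h3 ⊢
          rw [e2]
          have e3 := Nat.succ_div_of_not_dvd h3
          have e4 := Nat.div_add_mod (j + 1) c
          have e5 := Nat.div_add_mod j c
          rw [e3] at e4
          omega

/-- signed depth -/
def sdep (r c v : ℕ) : ℤ := if v ≤ r + 1 then dep r c v else - (dep r c v : ℤ)

lemma sdep_par (r c v : ℕ) (hr : 2 ≤ r) (hv : v ≠ 0) :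
    |sdep r c v - sdep r c (par r c v)| ≤ 1 := by
  have h := dep_par r c v hr hv
  have hlt := par_lt r c v hv
  by_cases hs : St r c v
  · rw [par_of_st hs] at h ⊢
    have h0 : dep r c 0 = 0 := by simp [dep]
    have h0' : sdep r c 0 = 0 := by simp [sdep, h0]
    rw [h0'] 
    unfold sdep
    rw [h, h0]
    split_ifs <;> simp
  · have hp := par_of_not hs
    have : v ≠ r + 2 := fun e => hs (Or.inr (Or.inl e))
    unfold sdep
    split_ifs
    · rw [h]; push_cast; rw [add_sub_cancel_left]; simp
    · omega
    · omega
    · rw [h]; push_cast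
      rw [show -((dep r c (par r c v) : ℤ) + 1) - -(dep r c (par r c v) : ℤ) = -1 by ring]; simp

lemma sdep_adj {r c n : ℕ} (hr : 2 ≤ r) {x y : Fin n} (h : (starTree r c n).Adj x y) :
    |sdep r c x - sdep r c y| ≤ 1 := by
  rcases h with h | h
  · rw [← h.2]; exact sdep_par r c x hr h.1
  · rw [← h.2, abs_sub_comm]; exact sdep_par r c y hr h.1

lemma sdep_walk {r c n : ℕ} (hr : 2 ≤ r) {x y : Fin n} (w : (starTree r c n).Walk x y) :
    |sdep r c x - sdep r c y| ≤ w.length := by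
  induction w with
  | nil => simp
  | cons h w ih =>
    rename_i a b d
    have h1 := sdep_adj hr h
    have h2 := abs_sub_le (sdep r c a) (sdep r c b) (sdep r c d)
    rw [SimpleGraph.Walk.length_cons]; push_cast; linarith

lemma starTree_diam (r c n : ℕ) (hr : 2 ≤ r) (hc1 : 1 ≤ c) (hc2 : c ≤ r)
    (hn1 : 2 * r + 2 ≤ n) : (starTree r c n).diam = 2 * r + 1 := by
  have hn : 0 < n := by omega
  have hconn := starTree_connected r c n hn
  have : Nonempty (Fin n) := ⟨⟨0, hn⟩⟩
  apply le_antisymm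
  · have d0 : ∀ k : ℕ, ∀ h : k < n, (starTree r c n).dist ⟨k, h⟩ ⟨0, hn⟩ ≤ dep r c k := by
      intro k
      induction k using Nat.strong_induction_on with
      | _ k ih =>
        intro h
        by_cases hk : k = 0
        · subst hk; simp
        · have h1 := ih (par r c k) (par_lt r c k hk) ((par_lt r c k hk).trans h)
          have h2 := SimpleGraph.dist_eq_one_iff_adj.2
            (adj_parF (r := r) (c := c) (⟨k, h⟩ : Fin n) hk)
          have h3 := hconn.dist_triangle (u := ⟨k, h⟩) (v := parF r c (⟨k, h⟩ : Fin n))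
            (w := ⟨0, hn⟩)
          have h4 := dep_par r c k hr hk
          rw [h2] at h3
          change _ ≤ 1 + (starTree r c n).dist ⟨par r c k, _⟩ ⟨0, hn⟩ at h3
          omega
    have d1 : ∀ k : ℕ, ∀ h : k + 1 < n, k ≤ r →
        (starTree r c n).dist ⟨k + 1, h⟩ ⟨1, by omega⟩ ≤ k := by
      intro k
      induction k with
      | zero => intro h _; simp
      | succ k ih =>
        intro h hk
        have h1 := ih (by omega) (by omega)
        have hadj : (starTree r c n).Adj ⟨k + 1 + 1, h⟩ ⟨k + 1, by omega⟩ := by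
          refine Or.inl ⟨by simp, ?_⟩
          apply par_of_not
          unfold St; simp only; omega
        have h2 := SimpleGraph.dist_eq_one_iff_adj.2 hadj
        have h3 := hconn.dist_triangle (u := ⟨k + 1 + 1, h⟩) (v := ⟨k + 1, by omega⟩)
            (w := ⟨1, by omega⟩)
        omega
    have d1' : ∀ x : Fin n, (x : ℕ) ≠ 0 → (x : ℕ) ≤ r + 1 →
        (starTree r c n).dist x ⟨1, by omega⟩ ≤ r := by
      intro x hx hx'
      have := d1 ((x : ℕ) - 1) (by omega) (by omega)
      have e : (⟨(x : ℕ) - 1 + 1, by omega⟩ : Fin n) = x := Fin.ext (by simp only; omega)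
      rw [e] at this
      omega
    have d0' : ∀ x : Fin n, ((x : ℕ) = 0 ∨ r + 1 < (x : ℕ)) →
        (starTree r c n).dist x ⟨0, hn⟩ ≤ r := by
      intro x hx
      refine (d0 x x.2).trans ?_
      have := Nat.mod_lt ((x : ℕ) - (2 * r + 2)) (show 0 < c by omega)
      unfold dep
      split_ifs <;> omega
    have h01 : (starTree r c n).dist (⟨1, by omega⟩ : Fin n) ⟨0, hn⟩ ≤ 1 := by
      have := d0 1 (by omega)
      simpa [dep] using this
    obtain ⟨x, y, hxy⟩ := (starTree r c n).exists_dist_eq_diam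
    rw [← hxy]
    have tri := fun u v w => hconn.dist_triangle (u := u) (v := v) (w := w)
    have sym := fun u v => (starTree r c n).dist_comm (u := u) (v := v)
    set o : Fin n := ⟨0, hn⟩
    set e : Fin n := ⟨1, by omega⟩
    by_cases hx : (x : ℕ) = 0 ∨ r + 1 < (x : ℕ) <;> by_cases hy : (y : ℕ) = 0 ∨ r + 1 < (y : ℕ)
    · have := tri x o y
      have := sym o y
      have := d0' x hx
      have := d0' y hy
      omega
    · have := tri x o y
      have := tri o e y
      have := sym o e
      have := sym e y
      have := d0' x hx
      have := d1' y (by omega) (by omega)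
      omega
    · have := tri x e y
      have := tri e o y
      have := sym o y
      have := d0' y hy
      have := d1' x (by omega) (by omega)
      omega
    · have := tri x e y
      have := sym e y
      have := d1' y (by omega) (by omega)
      have := d1' x (by omega) (by omega)
      omega
  · have h1 := SimpleGraph.dist_le_diam (SimpleGraph.connected_iff_ediam_ne_top.1 hconn)
      (u := ⟨r + 1, by omega⟩) (v := ⟨2 * r + 1, by omega⟩)
    obtain ⟨w, hw⟩ := hconn.exists_walk_length_eq_dist ⟨r + 1, by omega⟩ ⟨2 * r + 1, by omega⟩
    have h2 := sdep_walk hr w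
    rw [hw] at h2
    have e1 : sdep r c (r + 1) = r + 1 := by simp [sdep, dep]
    have e2 : sdep r c (2 * r + 1) = - r := by
      unfold sdep dep
      rw [if_neg (by omega), if_neg (by omega), if_pos (by omega)]
      congr 1; omega
    simp only [e1, e2] at h2
    have h3 := le_trans (le_abs_self _) h2
    omega

lemma extras_bound (s : ℝ) (c : ℕ) (hc1 : 1 ≤ c) (hs : 0 < s) (hc : 0 < 1 - s * c) (z : ℝ)
    (u : ℕ → ℝ) (k : ℕ) : ∀ m : ℕ, m ≤ k * c →
    s * (∑ j ∈ Finset.range m, if j + 1 = m ∨ c ∣ j + 1 then u j ^ 2 else 0)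
      - k * (s * z ^ 2 * (1 / (1 - s * c))) ≤
    ∑ j ∈ Finset.range m, (u j - if c ∣ j then z else u (j - 1)) ^ 2 := by
  have hpos : 0 ≤ s * z ^ 2 * (1 / (1 - s * c)) := by positivity
  induction k with
  | zero =>
    intro m hm
    have : m = 0 := by omega
    subst this; simp
  | succ k ih =>
    intro m hm
    by_cases hmk : m ≤ k * c
    · have := ih m hmk
      push_cast
      linarith
    · obtain ⟨l, rfl⟩ : ∃ l, m = k * c + l := ⟨m - k * c, by omega⟩
      have hl1 : 1 ≤ l := by omega
      have hlc : l ≤ c := by rw [Nat.succ_mul] at hm; omega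
      rw [Finset.sum_range_add, Finset.sum_range_add]
      have h1 := ih (k * c) le_rfl
      have e1 : (∑ j ∈ Finset.range (k * c), if j + 1 = k * c + l ∨ c ∣ j + 1 then u j ^ 2 else 0)
          = ∑ j ∈ Finset.range (k * c), if j + 1 = k * c ∨ c ∣ j + 1 then u j ^ 2 else 0 := by
        apply Finset.sum_congr rfl
        intro j hj
        rw [Finset.mem_range] at hj
        congr 1
        apply propext
        constructor
        · rintro (h | h)
          · omega
          · exact Or.inr h
        · rintro (h | h)
          · exact Or.inr (h ▸ Dvd.intro_left k rfl)
          · exact Or.inr h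
      have h2 := chain_bound s c hs (fun j => if j = 0 then z else u (k * c + (j - 1))) l hl1
        (by exact_mod_cast hlc) hc
      have e2 : (∑ j ∈ Finset.range l, if k * c + j + 1 = k * c + l ∨ c ∣ k * c + j + 1
          then u (k * c + j) ^ 2 else 0) = u (k * c + (l - 1)) ^ 2 := by
        obtain ⟨l', rfl⟩ : ∃ l', l = l' + 1 := ⟨l - 1, by omega⟩
        rw [Finset.sum_range_succ, if_pos (Or.inl (by ring)), Finset.sum_eq_zero]
        · simp
        · intro j hj
          rw [Finset.mem_range] at hj
          rw [if_neg]
          rintro (h | h)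
          · omega
          · rw [add_assoc, Nat.dvd_add_right (Dvd.intro_left k rfl)] at h
            have := Nat.le_of_dvd (by omega) h
            omega
      have e3 : (∑ j ∈ Finset.range l,
          (u (k * c + j) - if c ∣ k * c + j then z else u (k * c + j - 1)) ^ 2) =
          ∑ j ∈ Finset.range l, ((fun j => if j = 0 then z else u (k * c + (j - 1))) (j + 1)
            - (fun j => if j = 0 then z else u (k * c + (j - 1))) j) ^ 2 := by
        apply Finset.sum_congr rfl
        intro j hj
        rw [Finset.mem_range] at hj
        have : c ∣ k * c + j ↔ j = 0 := by
          rw [Nat.dvd_add_right (Dvd.intro_left k rfl)]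
          constructor
          · intro h
            exact Nat.eq_zero_of_dvd_of_lt h (by omega)
          · rintro rfl; simp
        simp only [this]
        by_cases hj0 : j = 0
        · simp [hj0]
        · simp only [hj0, if_false]
          rw [if_neg (by omega)]
          have a1 : k * c + (j + 1 - 1) = k * c + j := by omega
          have a2 : k * c + (j - 1) = k * c + j - 1 := by omega
          rw [a1, a2]
      replace h2 := h2.trans_eq e3.symm
      rw [if_neg (by omega), if_pos rfl] at h2
      rw [e1, e2]
      have e4 : ((k + 1 : ℕ) : ℝ) = k + 1 := by push_cast; rfl
      rw [e4]
      linarith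

lemma energy_eq (r c n : ℕ) (f : Fin n → ℝ) (g : ℕ → ℝ) (hg : ∀ x : Fin n, g x = f x) :
    dirichletEnergy (starTree r c n) f =
      ∑ i ∈ Finset.range n, if i ≠ 0 then (g i - g (par r c i)) ^ 2 else 0 := by
  have key : ∀ x y : Fin n, (if (starTree r c n).Adj x y then (f x - f y) ^ 2 else 0) =
      (if (x : ℕ) ≠ 0 ∧ parF r c x = y then (f x - f y) ^ 2 else 0) +
      (if (y : ℕ) ≠ 0 ∧ parF r c y = x then (f y - f x) ^ 2 else 0) := by
    intro x y
    have hx : parF r c x = y ↔ par r c x = y := by rw [Fin.ext_iff]; rfl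
    have hy : parF r c y = x ↔ par r c y = x := by rw [Fin.ext_iff]; rfl
    have hadj : (starTree r c n).Adj x y ↔
        ((x : ℕ) ≠ 0 ∧ parF r c x = y) ∨ ((y : ℕ) ≠ 0 ∧ parF r c y = x) := by
      rw [starTree_adj, hx, hy]
    by_cases h1 : (x : ℕ) ≠ 0 ∧ parF r c x = y
    · have h2 : ¬ ((y : ℕ) ≠ 0 ∧ parF r c y = x) := by
        intro h2
        have := par_lt r c x h1.1
        have := par_lt r c y h2.1
        have := hx.1 h1.2
        have := hy.1 h2.2
        omega
      rw [if_pos (hadj.2 (Or.inl h1)), if_pos h1, if_neg h2, add_zero]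
    · by_cases h2 : (y : ℕ) ≠ 0 ∧ parF r c y = x
      · rw [if_pos (hadj.2 (Or.inr h2)), if_neg h1, if_pos h2, zero_add]; ring
      · rw [if_neg (fun h => (hadj.1 h).elim h1 h2), if_neg h1, if_neg h2, add_zero]
  have e1 : (∑ x : Fin n, ∑ y : Fin n,
      if (x : ℕ) ≠ 0 ∧ parF r c x = y then (f x - f y) ^ 2 else 0) =
      ∑ i ∈ Finset.range n, if i ≠ 0 then (g i - g (par r c i)) ^ 2 else 0 := by
    rw [← Fin.sum_univ_eq_sum_range
      (fun i => if i ≠ 0 then (g i - g (par r c i)) ^ 2 else 0) n]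
    apply Finset.sum_congr rfl
    intro x _
    by_cases hx : (x : ℕ) = 0
    · simp [hx]
    · have : g (par r c x) = f (parF r c x) := hg (parF r c x)
      simp only [hx, ne_eq, not_false_eq_true, true_and, if_true]
      rw [Finset.sum_ite_eq, if_pos (Finset.mem_univ _), hg, this]
  unfold dirichletEnergy
  simp_rw [key, Finset.sum_add_distrib]
  rw [e1, Finset.sum_comm, e1]
  ring

/-- Arm ends. -/
def Ends (r c n i : ℕ) : Prop :=
  i = r + 1 ∨ i = 2 * r + 1 ∨ (2 * r + 2 ≤ i ∧ (i + 1 = n ∨ c ∣ i + 1 - (2 * r + 2)))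

lemma mem_leaves {r c n : ℕ} (x : Fin n) :
    x ∈ leavesFinset (starTree r c n) ↔ ∃! y, (starTree r c n).Adj x y := by
  unfold leavesFinset
  rw [Finset.mem_filter, SimpleGraph.degree_eq_one_iff_existsUnique_adj]
  simp

lemma leaf_ends (r c n : ℕ) (hr : 2 ≤ r) (hn1 : 2 * r + 2 ≤ n) (x : Fin n)
    (hx : x ∈ leavesFinset (starTree r c n)) : Ends r c n x := by
  rw [mem_leaves] at hx
  by_contra hE
  have hu : ∀ {y₁ y₂ : Fin n}, (starTree r c n).Adj x y₁ → (starTree r c n).Adj x y₂ → y₁ = y₂ :=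
    fun a b => hx.unique a b
  by_cases h0 : (x : ℕ) = 0
  · have := hu (y₁ := ⟨1, by omega⟩) (y₂ := ⟨r + 2, by omega⟩)
      (Or.inr ⟨by simp, by rw [h0]; exact par_of_st (Or.inl rfl)⟩)
      (Or.inr ⟨by simp, by rw [h0]; exact par_of_st (Or.inr (Or.inl rfl))⟩)
    simp at this
  · unfold Ends at hE
    push Not at hE
    have hlt : (x : ℕ) + 1 < n := by
      by_contra hcon
      have := hE.2.2
      have := x.2
      by_cases h : 2 * r + 2 ≤ (x : ℕ)
      · exact (hE.2.2 h).1 (by omega)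
      · omega
    have hs : ¬ St r c ((x : ℕ) + 1) := by
      unfold St
      rintro (h | h | h)
      · omega
      · omega
      · have : 2 * r + 2 ≤ (x : ℕ) := by omega
        exact (hE.2.2 this).2 h.2
    have := hu (y₁ := parF r c x) (y₂ := ⟨(x : ℕ) + 1, hlt⟩) (adj_parF x h0)
      (Or.inr ⟨by simp, by rw [par_of_not hs]; simp⟩)
    have h3 := congrArg Fin.val this
    have h4 := par_lt r c x h0
    change par r c x = (x : ℕ) + 1 at h3
    omega

lemma end_leaf (r c n : ℕ) (x : Fin n) (h0 : (x : ℕ) ≠ 0) (hs : St r c (x + 1)) :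
    x ∈ leavesFinset (starTree r c n) := by
  rw [mem_leaves]
  refine ⟨parF r c x, adj_parF x h0, ?_⟩
  rintro y (h | h)
  · exact Fin.ext h.2.symm
  · have := par_eq h.2 h0
    rw [this.1] at this
    exact absurd hs this.2

lemma quad_bound (r b c n : ℕ) (hr : 2 ≤ r) (hb : 2 ≤ b) (hc1 : 1 ≤ c)
    (hn1 : 2 * r + 2 ≤ n) (hn2 : n ≤ 2 * r + (b - 2) * c + 2) (s : ℝ) (hs : 0 < s)
    (h1 : 0 < 1 - s * r) (h2 : 0 < 1 - s * c) (h3 : 0 < s * (r + 1) - 1)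
    (h4 : 1 / (s * (r + 1) - 1) = 1 / (1 - s * r) + (b - 2) * (1 / (1 - s * c)))
    (f : Fin n → ℝ)
    (hf : (s * (r + 1) - 1) * f ⟨r + 1, by omega⟩ + f ⟨0, by omega⟩ = 0) :
    s * ∑ x ∈ leavesFinset (starTree r c n), f x ^ 2 ≤ dirichletEnergy (starTree r c n) f := by
  obtain ⟨g, hg⟩ : ∃ g : ℕ → ℝ, ∀ x : Fin n, g x = f x :=
    ⟨fun i => if h : i < n then f ⟨i, h⟩ else 0, fun x => by simp⟩
  rw [energy_eq r c n f g hg]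
  have hB : ∑ x ∈ leavesFinset (starTree r c n), f x ^ 2 ≤
      ∑ i ∈ Finset.range n, if Ends r c n i then g i ^ 2 else 0 := by
    rw [← Fin.sum_univ_eq_sum_range (fun i => if Ends r c n i then g i ^ 2 else 0) n]
    rw [← Finset.sum_filter_add_sum_filter_not Finset.univ
      (fun x => x ∈ leavesFinset (starTree r c n))]
    have e : Finset.univ.filter (fun x => x ∈ leavesFinset (starTree r c n)) =
      leavesFinset (starTree r c n) := by ext; simp
    rw [e]
    have p : 0 ≤ ∑ x ∈ Finset.univ.filter (fun x => x ∉ leavesFinset (starTree r c n)),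
        (if Ends r c n x then g x ^ 2 else 0) :=
      Finset.sum_nonneg fun x _ => by split_ifs <;> positivity
    have q : ∑ x ∈ leavesFinset (starTree r c n), f x ^ 2 =
        ∑ x ∈ leavesFinset (starTree r c n), (if Ends r c n x then g x ^ 2 else 0) := by
      apply Finset.sum_congr rfl
      intro x hx
      rw [if_pos (leaf_ends r c n hr hn1 x hx), hg]
    linarith
  refine (mul_le_mul_of_nonneg_left hB hs.le).trans ?_
  have hf' : (s * (r + 1) - 1) * g (r + 1) + g 0 = 0 := by
    rw [← hf, ← hg, ← hg]
  clear hB hf hg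
  obtain ⟨m, rfl⟩ : ∃ m, n = r + 2 + r + m := ⟨n - (2 * r + 2), by omega⟩
  have hm : m ≤ (b - 2) * c := by omega
  rw [Finset.sum_range_add _ (r + 2 + r) m, Finset.sum_range_add _ (r + 2) r,
    Finset.sum_range_add _ (r + 2 + r) m, Finset.sum_range_add _ (r + 2) r]
  -- ends
  have E1 : (∑ i ∈ Finset.range (r + 2), if Ends r c (r + 2 + r + m) i then g i ^ 2 else 0)
      = g (r + 1) ^ 2 := by
    rw [Finset.sum_range_succ, if_pos (show Ends r c _ (r + 1) from Or.inl rfl),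
      Finset.sum_eq_zero, zero_add]
    intro i hi
    rw [Finset.mem_range] at hi
    rw [if_neg]
    unfold Ends; omega
  have E2 : (∑ i ∈ Finset.range r, if Ends r c (r + 2 + r + m) (r + 2 + i)
      then g (r + 2 + i) ^ 2 else 0) = g (2 * r + 1) ^ 2 := by
    obtain ⟨q, rfl⟩ : ∃ q, r = q + 1 := ⟨r - 1, by omega⟩
    have a : q + 1 + 2 + q = 2 * (q + 1) + 1 := by ring
    rw [Finset.sum_range_succ, a,
      if_pos (show Ends (q + 1) c _ (2 * (q + 1) + 1) from Or.inr (Or.inl rfl)),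
      Finset.sum_eq_zero, zero_add]
    intro i hi
    rw [Finset.mem_range] at hi
    rw [if_neg]
    unfold Ends; omega
  have E3 : (∑ i ∈ Finset.range m, if Ends r c (r + 2 + r + m) (r + 2 + r + i)
      then g (r + 2 + r + i) ^ 2 else 0) =
      ∑ i ∈ Finset.range m, if i + 1 = m ∨ c ∣ i + 1 then g (r + 2 + r + i) ^ 2 else 0 := by
    apply Finset.sum_congr rfl
    intro i hi
    congr 1
    apply propext
    unfold Ends
    have a : r + 2 + r + i + 1 - (2 * r + 2) = i + 1 := by omega
    rw [a]
    constructor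
    · rintro (h | h | ⟨h, h' | h'⟩)
      · omega
      · omega
      · left; omega
      · right; exact h'
    · rintro (h | h)
      · exact Or.inr (Or.inr ⟨by omega, Or.inl (by omega)⟩)
      · exact Or.inr (Or.inr ⟨by omega, Or.inr h⟩)
  -- energies
  have F1 : (∑ i ∈ Finset.range (r + 2), if i ≠ 0 then (g i - g (par r c i)) ^ 2 else 0)
      = ∑ j ∈ Finset.range (r + 1), (g (j + 1) - g j) ^ 2 := by
    rw [Finset.sum_range_succ']
    simp only [ne_eq, not_true_eq_false, if_false, add_zero]
    apply Finset.sum_congr rfl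
    intro j hj
    rw [Finset.mem_range] at hj
    rw [if_pos (by omega)]
    have : par r c (j + 1) = j := by
      by_cases h0 : j = 0
      · subst h0; exact par_of_st (Or.inl rfl)
      · rw [par_of_not]
        · omega
        · unfold St; omega
    rw [this]
  have F2 : (∑ i ∈ Finset.range r, if r + 2 + i ≠ 0
      then (g (r + 2 + i) - g (par r c (r + 2 + i))) ^ 2 else 0)
      = ∑ j ∈ Finset.range r, ((fun j => if j = 0 then g 0 else g (r + 1 + j)) (j + 1)
        - (fun j => if j = 0 then g 0 else g (r + 1 + j)) j) ^ 2 := by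
    apply Finset.sum_congr rfl
    intro j hj
    rw [Finset.mem_range] at hj
    rw [if_pos (by omega)]
    simp only
    rw [if_neg (by omega : j + 1 ≠ 0)]
    have a : r + 1 + (j + 1) = r + 2 + j := by ring
    rw [a]
    by_cases h0 : j = 0
    · subst h0
      rw [par_of_st (Or.inr (Or.inl rfl)), if_pos rfl]
    · rw [if_neg h0, par_of_not]
      · congr 3; omega
      · unfold St; omega
  have F3 : (∑ i ∈ Finset.range m, if r + 2 + r + i ≠ 0
      then (g (r + 2 + r + i) - g (par r c (r + 2 + r + i))) ^ 2 else 0)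
      = ∑ j ∈ Finset.range m, ((fun j => g (r + 2 + r + j)) j
          - if c ∣ j then g 0 else (fun j => g (r + 2 + r + j)) (j - 1)) ^ 2 := by
    apply Finset.sum_congr rfl
    intro j hj
    rw [if_pos (by omega)]
    have a : r + 2 + r + j - (2 * r + 2) = j := by omega
    by_cases hd : c ∣ j
    · rw [if_pos hd, par_of_st (Or.inr (Or.inr ⟨by omega, by rw [a]; exact hd⟩))]
    · rw [if_neg hd, par_of_not]
      · have : j ≠ 0 := fun h => hd (h ▸ dvd_zero c)
        have : r + 2 + r + j - 1 = r + 2 + r + (j - 1) := by omega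
        rw [this]
      · unfold St
        rw [a]
        rintro (h | h | h)
        · omega
        · omega
        · exact hd h.2
  have L1 := (long_bound s (r + 1) hs g (r + 1) (by omega) (by push_cast; rfl) h3 hf').trans_eq
    F1.symm
  have L2 := (chain_bound s r hs (fun j => if j = 0 then g 0 else g (r + 1 + j)) r
    (by omega) le_rfl h1).trans_eq F2.symm
  have L3 := (extras_bound s c hc1 hs h2 (g 0) (fun j => g (r + 2 + r + j)) (b - 2) m hm).trans_eq
    F3.symm
  rw [← E3] at L3
  have a : r + 1 + r = 2 * r + 1 := by ring
  rw [if_neg (by omega), if_pos rfl, a] at L2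
  have e : ((b - 2 : ℕ) : ℝ) = b - 2 := by rw [Nat.cast_sub hb]; norm_num
  rw [e] at L3
  rw [h4] at L1
  rw [E1, E2]
  linarith

lemma exists_test {V : Type*} [Fintype V] (B : Finset V) (F : Submodule ℝ (V → ℝ))
    (hF : Module.finrank ℝ (F.map
      (LinearMap.funLeft ℝ ℝ (fun x : {v // v ∈ B} => (x : V)))) = 2)
    (L : (V → ℝ) →ₗ[ℝ] ℝ) : ∃ f ∈ F, L f = 0 ∧ ∃ x ∈ B, f x ≠ 0 := by
  set R := LinearMap.funLeft ℝ ℝ (fun x : {v // v ∈ B} => (x : V)) with hR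
  let bs := Module.finBasisOfFinrankEq ℝ (F.map R) hF
  have hli := bs.linearIndependent
  obtain ⟨f0, hf0, e0⟩ := Submodule.mem_map.1 (bs 0).2
  obtain ⟨f1, hf1, e1⟩ := Submodule.mem_map.1 (bs 1).2
  have hne : ∀ f, R f ≠ 0 → ∃ x ∈ B, f x ≠ 0 := by
    intro f hf
    by_contra hcon
    push Not at hcon
    exact hf (funext fun x => hcon x x.2)
  rw [Fintype.linearIndependent_iff] at hli
  have hpair : ∀ a b : ℝ, R (a • f0 + b • f1) = 0 → a = 0 ∧ b = 0 := by
    intro a b h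
    have h' := hli ![a, b] (by
      apply Subtype.ext
      simp only [Fin.sum_univ_two]
      simp [← e0, ← e1]
      simpa using h)
    exact ⟨by simpa using h' 0, by simpa using h' 1⟩
  by_cases h : R (L f1 • f0 + (- L f0) • f1) = 0
  · have := hpair _ _ h
    refine ⟨f1, hf1, this.1, hne _ fun h' => ?_⟩
    have := (hpair 0 1 (by simpa using h')).2
    exact one_ne_zero this
  · refine ⟨_, F.add_mem (F.smul_mem _ hf0) (F.smul_mem _ hf1), ?_, hne _ h⟩
    simp; ring

lemma eig_set_nonempty {V : Type*} [Fintype V] (G : SimpleGraph V) (B : Finset V) (u v : V)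
    (hu : u ∈ B) (hv : v ∈ B) (huv : u ≠ v) :
    { t : ℝ | ∃ F : Submodule ℝ (V → ℝ),
    Module.finrank ℝ (F.map (LinearMap.funLeft ℝ ℝ (fun x : {v // v ∈ B} => (x : V)))) = 2 ∧
    ∀ f ∈ F, dirichletEnergy G f ≤ t * ∑ x ∈ B, (f x) ^ 2 }.Nonempty := by
  set R := LinearMap.funLeft ℝ ℝ (fun x : {v // v ∈ B} => (x : V)) with hR
  let w : Fin 2 → (V → ℝ) := ![Pi.single u 1, Pi.single v 1]
  refine ⟨2 * Fintype.card V, Submodule.span ℝ (Set.range w), ?_, ?_⟩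
  · rw [Submodule.map_span, ← Set.range_comp, finrank_span_eq_card]
    · simp
    · rw [Fintype.linearIndependent_iff]
      intro a ha
      rw [Fin.sum_univ_two] at ha
      have hu' := congrFun ha ⟨u, hu⟩
      have hv' := congrFun ha ⟨v, hv⟩
      simp [w, hR, LinearMap.funLeft, huv, huv.symm] at hu' hv'
      intro i
      fin_cases i
      · exact hu'
      · exact hv'
  · intro f hf
    have hsupp : ∀ x, x ∉ B → f x = 0 := by
      intro x hx
      have hle : Submodule.span ℝ (Set.range w) ≤ LinearMap.ker (LinearMap.proj (R := ℝ) (φ := fun _ : V => ℝ) x) := by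
        rw [Submodule.span_le]
        rintro _ ⟨i, rfl⟩
        have h1 : x ≠ u := fun h => hx (h ▸ hu)
        have h2 : x ≠ v := fun h => hx (h ▸ hv)
        fin_cases i <;> simp [w, h1, h2]
      exact hle hf
    have hS : ∑ x ∈ B, f x ^ 2 = ∑ x, f x ^ 2 := by
      apply Finset.sum_subset (Finset.subset_univ _)
      intro x _ hx
      rw [hsupp x hx]; simp
    rw [hS]
    unfold dirichletEnergy
    have : (∑ x : V, ∑ y : V, if G.Adj x y then (f x - f y) ^ 2 else 0) ≤
        ∑ x : V, ∑ y : V, (2 * f x ^ 2 + 2 * f y ^ 2) := by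
      apply Finset.sum_le_sum; intro x _
      apply Finset.sum_le_sum; intro y _
      split_ifs
      · nlinarith [sq_nonneg (f x + f y)]
      · positivity
    have e : (∑ x : V, ∑ y : V, (2 * f x ^ 2 + 2 * f y ^ 2)) =
        4 * Fintype.card V * ∑ x, f x ^ 2 := by
      simp only [Finset.sum_add_distrib, Finset.sum_const, Finset.card_univ, nsmul_eq_mul,
        ← Finset.mul_sum]
      ring
    linarith

/-- Let `D = 2r + 1 ≥ 5` be an odd integer, and let `b ≥ 2`, `1 ≤ c ≤ r`,
and `n` be integers with `2r + 2 ≤ n ≤ 2r + (b-2)c + 2`. Then `σ̃_{2,max}(D,n) ≥ C⁻(r,b,c)`. -/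
theorem stmt8 (r b c n : ℕ) (hr : 2 ≤ r) (hb : 2 ≤ b) (hc1 : 1 ≤ c) (hc2 : c ≤ r)
    (hn1 : 2 * r + 2 ≤ n) (hn2 : n ≤ 2 * r + (b - 2) * c + 2) :
    Cminus r b c ≤ sigmaTildeMax (2 * r + 1) n := by
  obtain ⟨s, hsC, hs, h1, h2, h3, h4⟩ := cminus_facts r b c hr hb hc1 hc2
  rw [← hsC]
  have hbdd : BddAbove { s : ℝ | ∃ G : SimpleGraph (Fin n), G.IsTree ∧ G.diam = 2 * r + 1 ∧
      s = steklovEig G (leavesFinset G) 2 } := by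
    apply Set.Finite.bddAbove
    apply (Set.finite_range (fun G : SimpleGraph (Fin n) => steklovEig G (leavesFinset G) 2)).subset
    rintro _ ⟨G, -, -, rfl⟩
    exact ⟨G, rfl⟩
  refine le_csSup_of_le hbdd ⟨starTree r c n, starTree_isTree r c n (by omega),
    starTree_diam r c n hr hc1 hc2 hn1, rfl⟩ ?_
  unfold steklovEig
  apply le_csInf
  · apply eig_set_nonempty _ _ ⟨r + 1, by omega⟩ ⟨2 * r + 1, by omega⟩
    · exact end_leaf _ _ _ _ (by simp) (Or.inr (Or.inl rfl))
    · exact end_leaf _ _ _ _ (by simp) (Or.inr (Or.inr ⟨le_rfl, by simp⟩))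
    · intro h
      have := congrArg Fin.val h
      simp only at this
      omega
  · rintro t ⟨F, hF, hFt⟩
    obtain ⟨f, hfF, hL, x, hx, hfx⟩ := exists_test _ F hF
      ((s * (r + 1) - 1) • LinearMap.proj (⟨r + 1, by omega⟩ : Fin n)
        + LinearMap.proj (⟨0, by omega⟩ : Fin n))
    have hq := quad_bound r b c n hr hb hc1 hn1 hn2 s hs h1 h2 h3 h4 f (by simpa using hL)
    have hpos : 0 < ∑ x ∈ leavesFinset (starTree r c n), f x ^ 2 :=
      Finset.sum_pos' (fun _ _ => sq_nonneg _) ⟨x, hx, by positivity⟩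
    exact le_of_mul_le_mul_right (hq.trans (hFt f hfF)) hpos
end

section
/- Let T be a tree with at least 3 vertices and leaves as boundary B. Then 0 = σ_1(T) < σ_2(T) ≤ ⋯ ≤ σ_{|B|}(T) ≤ 1; in particular every Steklov eigenvalue of T is at most 1 and the eigenvalue 0 has multiplicity exactly 1. -/
open scoped BigOperators
open Classical

lemma energy_nonneg {V : Type*} [Fintype V] (G : SimpleGraph V) (f : V → ℝ) :
    0 ≤ dirichletEnergy G f := by
  unfold dirichletEnergy
  refine div_nonneg (Finset.sum_nonneg fun x _ => Finset.sum_nonneg fun y _ => ?_) (by norm_num)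
  split_ifs <;> positivity

lemma edge_le_energy {V : Type*} [Fintype V] (G : SimpleGraph V) (f : V → ℝ) {x y : V}
    (h : G.Adj x y) : (f x - f y) ^ 2 ≤ 2 * dirichletEnergy G f := by
  unfold dirichletEnergy
  have nn : ∀ x y : V, 0 ≤ (if G.Adj x y then (f x - f y) ^ 2 else 0) := by
    intro x y; split_ifs <;> positivity
  have h1 := Finset.single_le_sum (f := fun y => if G.Adj x y then (f x - f y) ^ 2 else 0)
    (fun y _ => nn x y) (Finset.mem_univ y)
  have h2 := Finset.single_le_sum
    (f := fun x => ∑ y, if G.Adj x y then (f x - f y) ^ 2 else 0)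
    (fun x _ => Finset.sum_nonneg fun y _ => nn x y) (Finset.mem_univ x)
  simp only [h, if_true] at h1
  linarith

lemma walk_le_energy {V : Type*} [Fintype V] (G : SimpleGraph V) (f : V → ℝ) {x y : V}
    (p : G.Walk x y) : |f x - f y| ≤ p.length * √(2 * dirichletEnergy G f) := by
  induction p with
  | nil => simp
  | @cons u v w h p ih =>
    have h1 := Real.abs_le_sqrt (edge_le_energy G f h)
    have h2 := abs_sub_le (f u) (f v) (f w)
    rw [SimpleGraph.Walk.length_cons]
    push_cast
    linarith

lemma poincare {V : Type*} [Fintype V] (G : SimpleGraph V) (hG : G.Connected) (B : Finset V)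
    (b : V) : ∃ C : ℝ, 0 < C ∧ ∀ f : V → ℝ, f b = 0 →
      ∑ x ∈ B, f x ^ 2 ≤ C * dirichletEnergy G f := by
  have hw : ∀ x, Nonempty (G.Walk x b) := fun x => hG.preconnected x b
  refine ⟨∑ x ∈ B, 2 * ((hw x).some.length : ℝ) ^ 2 + 1, by positivity, fun f hf => ?_⟩
  have hE := energy_nonneg G f
  rw [add_mul, Finset.sum_mul]
  have : ∑ x ∈ B, f x ^ 2 ≤
      ∑ x ∈ B, 2 * ((hw x).some.length : ℝ) ^ 2 * dirichletEnergy G f := by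
    refine Finset.sum_le_sum fun x _ => ?_
    have h := walk_le_energy G f (hw x).some
    rw [hf, sub_zero] at h
    have h2 := pow_le_pow_left₀ (abs_nonneg _) h 2
    rw [sq_abs, mul_pow, Real.sq_sqrt (by positivity)] at h2
    linarith
  linarith

lemma leaves_not_adj {V : Type*} [Fintype V] (G : SimpleGraph V) (hG : G.Connected)
    (hcard : 3 ≤ Fintype.card V) {u v : V} (hu : u ∈ leavesFinset G) (hv : v ∈ leavesFinset G) :
    ¬ G.Adj u v := by
  intro h
  simp only [leavesFinset, Finset.mem_filter, Finset.mem_univ, true_and,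
    SimpleGraph.degree_eq_one_iff_existsUnique_adj] at hu hv
  have key : ∀ a b : V, G.Walk a b → (a = u ∨ a = v) → (b = u ∨ b = v) := by
    intro a b p
    induction p with
    | nil => exact id
    | cons hab p ih =>
      intro ha
      apply ih
      rcases ha with rfl | rfl
      · exact Or.inr (hu.unique hab h)
      · exact Or.inl (hv.unique hab h.symm)
  have hsub : (Finset.univ : Finset V) ⊆ {u, v} := by
    intro w _
    obtain ⟨p⟩ := hG.preconnected u w
    have := key u w p (Or.inl rfl)
    simpa using this
  have := Finset.card_le_card hsub
  have h2 := Finset.card_le_two (a := u) (b := v)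
  rw [Finset.card_univ] at this
  omega

lemma energy_le_of_support {V : Type*} [Fintype V] (G : SimpleGraph V) (hG : G.Connected)
    (hcard : 3 ≤ Fintype.card V) (f : V → ℝ) (hf : ∀ x ∉ leavesFinset G, f x = 0) :
    dirichletEnergy G f ≤ ∑ x ∈ leavesFinset G, f x ^ 2 := by
  have h1 : ∀ x y, (if G.Adj x y then (f x - f y) ^ 2 else 0) =
      (if G.Adj x y then f x ^ 2 else 0) + (if G.Adj y x then f y ^ 2 else 0) := by
    intro x y
    by_cases h : G.Adj x y
    · have hz : f x * f y = 0 := by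
        by_cases hx : x ∈ leavesFinset G
        · by_cases hy : y ∈ leavesFinset G
          · exact absurd h (leaves_not_adj G hG hcard hx hy)
          · rw [hf y hy, mul_zero]
        · rw [hf x hx, zero_mul]
      simp only [h, h.symm, if_true]
      linear_combination (-2) * hz
    · have h' : ¬ G.Adj y x := fun k => h k.symm
      simp [h, h']
  have h2 : ∑ x : V, ∑ y : V, (if G.Adj x y then f x ^ 2 else 0) =
      ∑ x ∈ leavesFinset G, f x ^ 2 := by
    rw [← Finset.sum_subset (Finset.subset_univ (leavesFinset G))]
    · refine Finset.sum_congr rfl fun x hx => ?_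
      simp only [leavesFinset, Finset.mem_filter, Finset.mem_univ, true_and] at hx
      rw [← Finset.sum_filter, Finset.sum_const, ← SimpleGraph.neighborFinset_eq_filter,
        SimpleGraph.card_neighborFinset_eq_degree, hx, one_smul]
    · intro x _ hx
      simp [hf x hx]
  unfold dirichletEnergy
  simp only [h1, Finset.sum_add_distrib]
  rw [Finset.sum_comm (f := fun x y => if G.Adj y x then f y ^ 2 else 0), h2]
  linarith

/-- The set whose infimum is `steklovEig`. -/
def stekSet {V : Type*} [Fintype V] (G : SimpleGraph V) (B : Finset V) (k : ℕ) : Set ℝ :=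
  { t : ℝ | ∃ F : Submodule ℝ (V → ℝ),
    Module.finrank ℝ (F.map (LinearMap.funLeft ℝ ℝ (fun x : {v // v ∈ B} => (x : V)))) = k ∧
    ∀ f ∈ F, dirichletEnergy G f ≤ t * ∑ x ∈ B, (f x) ^ 2 }

lemma stekSet_anti {V : Type*} [Fintype V] (G : SimpleGraph V) (B : Finset V) {k l : ℕ}
    (h : k ≤ l) : stekSet G B l ⊆ stekSet G B k := by
  rintro t ⟨F, hF, hE⟩
  set R := LinearMap.funLeft ℝ ℝ (fun x : {v // v ∈ B} => (x : V)) with hR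
  obtain ⟨w, hw⟩ := exists_linearIndependent_of_le_finrank (R := ℝ) (M := F.map R)
    (n := k) (by rw [hF]; exact h)
  have hw' : LinearIndependent ℝ (fun i => (w i : {v // v ∈ B} → ℝ)) :=
    hw.map' (F.map R).subtype (Submodule.ker_subtype _)
  choose g hgF hg using fun i => (w i).2
  refine ⟨Submodule.span ℝ (Set.range g), ?_, fun f hf => hE f ?_⟩
  · rw [Submodule.map_span, ← Set.range_comp]
    have : R ∘ g = fun i => (w i : {v // v ∈ B} → ℝ) := funext hg
    rw [this, finrank_span_eq_card hw', Fintype.card_fin]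
  · refine (Submodule.span_le.2 ?_) hf
    rintro _ ⟨i, rfl⟩
    exact hgF i

lemma sum_sq_pos {V : Type*} [Fintype V] (B : Finset V) (f : V → ℝ)
    (h : LinearMap.funLeft ℝ ℝ (fun x : {v // v ∈ B} => (x : V)) f ≠ 0) :
    0 < ∑ x ∈ B, f x ^ 2 := by
  obtain ⟨x, hx⟩ := Function.ne_iff.1 h
  exact Finset.sum_pos' (fun _ _ => sq_nonneg _) ⟨x, x.2, sq_pos_of_ne_zero hx⟩

lemma stekSet_nonneg {V : Type*} [Fintype V] (G : SimpleGraph V) (B : Finset V) {k : ℕ}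
    (hk : 1 ≤ k) {t : ℝ} (ht : t ∈ stekSet G B k) : 0 ≤ t := by
  obtain ⟨F, hF, hE⟩ := ht
  have : 0 < Module.finrank ℝ
      (F.map (LinearMap.funLeft ℝ ℝ (fun x : {v // v ∈ B} => (x : V)))) := by omega
  obtain ⟨⟨_, f, hf, rfl⟩, hne⟩ := Module.finrank_pos_iff_exists_ne_zero.1 this
  have hp := sum_sq_pos B f (fun h0 => hne (Subtype.ext h0))
  have h1 := hE f hf
  have h2 := energy_nonneg G f
  by_contra hlt
  nlinarith [mul_neg_of_neg_of_pos (not_le.1 hlt) hp]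

lemma stekSet_two {V : Type*} [Fintype V] (G : SimpleGraph V) (hG : G.Connected) (B : Finset V)
    (hB : B.Nonempty) : ∃ c : ℝ, 0 < c ∧ ∀ t ∈ stekSet G B 2, c ≤ t := by
  obtain ⟨b, hb⟩ := hB
  obtain ⟨C, hC, hP⟩ := poincare G hG B b
  refine ⟨C⁻¹, inv_pos.2 hC, ?_⟩
  rintro t ⟨F, hF, hE⟩
  set R := LinearMap.funLeft ℝ ℝ (fun x : {v // v ∈ B} => (x : V)) with hR
  let ev : F.map R →ₗ[ℝ] ℝ := (LinearMap.proj (⟨b, hb⟩ : {v // v ∈ B})) ∘ₗ (F.map R).subtype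
  have hker : LinearMap.ker ev ≠ ⊥ := by
    apply LinearMap.ker_ne_bot_of_finrank_lt
    rw [hF]; simp
  obtain ⟨⟨_, f, hf, rfl⟩, hk, hne⟩ := Submodule.exists_mem_ne_zero_of_ne_bot hker
  have hp := sum_sq_pos B f (fun h0 => hne (Subtype.ext h0))
  have hfb : f b = 0 := hk
  have h1 := hE f hf
  have h2 := hP f hfb
  rw [inv_le_iff_one_le_mul₀' hC]
  have h3 : ∑ x ∈ B, f x ^ 2 ≤ (C * t) * ∑ x ∈ B, f x ^ 2 :=
    h2.trans (by rw [mul_assoc]; exact mul_le_mul_of_nonneg_left h1 hC.le)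
  exact le_of_mul_le_mul_right (by rw [one_mul]; exact h3) hp

lemma one_mem_stekSet {V : Type*} [Fintype V] (G : SimpleGraph V) (hG : G.Connected)
    (hcard : 3 ≤ Fintype.card V) : (1 : ℝ) ∈ stekSet G (leavesFinset G) (leavesFinset G).card := by
  refine ⟨{ carrier := {f | ∀ x ∉ leavesFinset G, f x = 0}
            add_mem' := ?_
            zero_mem' := ?_
            smul_mem' := ?_ }, ?_, ?_⟩
  · intro f g hf hg x hx
    simp [hf x hx, hg x hx]
  · intro x _; rfl
  · intro c f hf x hx
    simp [hf x hx]
  · have : ∀ F : Submodule ℝ (V → ℝ), (∀ f, (∀ x ∉ leavesFinset G, f x = 0) → f ∈ F) →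
        F.map (LinearMap.funLeft ℝ ℝ (fun x : {v // v ∈ leavesFinset G} => (x : V))) = ⊤ := by
      intro F hF
      rw [eq_top_iff]
      intro g _
      refine ⟨fun x => if h : x ∈ leavesFinset G then g ⟨x, h⟩ else 0, hF _ ?_, ?_⟩
      · intro x hx; simp [hx]
      · ext x; simp [LinearMap.funLeft_apply]
    rw [this _ ?_, finrank_top, Module.finrank_fintype_fun_eq_card,
      Fintype.card_coe]
    exact fun f hf => hf
  · intro f hf
    rw [one_mul]
    exact energy_le_of_support G hG hcard f hf

lemma zero_mem_stekSet {V : Type*} [Fintype V] (G : SimpleGraph V) (B : Finset V)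
    (hB : B.Nonempty) : (0 : ℝ) ∈ stekSet G B 1 := by
  obtain ⟨b, hb⟩ := hB
  refine ⟨Submodule.span ℝ {fun _ => 1}, ?_, ?_⟩
  · rw [Submodule.map_span, Set.image_singleton]
    apply finrank_span_singleton
    intro h
    have := congrFun h ⟨b, hb⟩
    simp [LinearMap.funLeft_apply] at this
  · intro f hf
    obtain ⟨c, rfl⟩ := Submodule.mem_span_singleton.1 hf
    simp [dirichletEnergy]

/-- Let `T` be a tree with at least 3 vertices and leaves as boundary `B`.
Then `0 = σ₁(T) < σ₂(T) ≤ ⋯ ≤ σ_{|B|}(T) ≤ 1`; in particular every Steklov eigenvalue of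
`T` is at most `1` and the eigenvalue `0` has multiplicity exactly `1`. -/
theorem stmt15 {V : Type*} [Fintype V] [DecidableEq V] (T : SimpleGraph V)
    (hT : T.IsTree) (hcard : 3 ≤ Fintype.card V) :
    steklovEig T (leavesFinset T) 1 = 0 ∧
    0 < steklovEig T (leavesFinset T) 2 ∧
    (∀ k : ℕ, 1 ≤ k → k < (leavesFinset T).card →
      steklovEig T (leavesFinset T) k ≤ steklovEig T (leavesFinset T) (k + 1)) ∧
    (∀ k : ℕ, 1 ≤ k → k ≤ (leavesFinset T).card → steklovEig T (leavesFinset T) k ≤ 1) := by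
 
  have hnt : Nontrivial V := Fintype.one_lt_card_iff_nontrivial.1 (by omega)
  have hconn := hT.connected
  have htwo : 2 ≤ (leavesFinset T).card := by
    obtain ⟨u, v, huv, hu, hv⟩ := hT.exists_ne_and_degree_eq_one
    have : 1 < (leavesFinset T).card := Finset.one_lt_card.2
      ⟨u, by simp only [leavesFinset, Finset.mem_filter]; exact ⟨Finset.mem_univ _, by convert hu⟩,
       v, by simp only [leavesFinset, Finset.mem_filter]; exact ⟨Finset.mem_univ _, by convert hv⟩,
       huv⟩
    omega
  have hne : (leavesFinset T).Nonempty := Finset.card_pos.1 (by omega)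
  have hbdd : ∀ k, 1 ≤ k → BddBelow (stekSet T (leavesFinset T) k) :=
    fun k hk => ⟨0, fun t ht => stekSet_nonneg T _ hk ht⟩
  have hone : ∀ k, k ≤ (leavesFinset T).card → (1 : ℝ) ∈ stekSet T (leavesFinset T) k :=
    fun k hk => stekSet_anti T _ hk (one_mem_stekSet T hconn hcard)
  have hdef : ∀ k, steklovEig T (leavesFinset T) k = sInf (stekSet T (leavesFinset T) k) :=
    fun k => rfl
  simp only [hdef]
  refine ⟨le_antisymm (csInf_le (hbdd 1 le_rfl) (zero_mem_stekSet T _ hne))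
      (Real.sInf_nonneg fun t ht => stekSet_nonneg T _ le_rfl ht), ?_, ?_, ?_⟩
  · obtain ⟨c, hc, h⟩ := stekSet_two T hconn (leavesFinset T) hne
    exact hc.trans_le (le_csInf ⟨1, hone 2 htwo⟩ h)
  · intro k hk hlt
    exact csInf_le_csInf (hbdd k hk) ⟨1, hone (k + 1) hlt⟩ (stekSet_anti T _ (Nat.le_succ k))
  · intro k hk hle
    exact csInf_le (hbdd k hk) (hone k hle)
end
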